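/- There exists a constant C > 0 such that for all X ≥ 3, |∑_{d ≤ D} χ₄(d)/φ(d) − (π/4)·∏_p (1 + χ₄(p)/(p(p−1)))| ≤ C·X^{-1/20}, where D = X^{1/2}/(log X)^A for any fixed A > 10. -/

import Mathlib

open Real Finset

/-- The non-principal Dirichlet character modulo 4, as a function on ℕ, real-valued. -/
noncomputable def chi4 (d : ℕ) : ℝ :=
  if d % 4 = 1 then 1 else if d % 4 = 3 then -1 else 0

lemma chi4_eq (n : ℕ) : chi4 n = ((ZMod.χ₄ n : ℤ) : ℝ) := by
  rw [ZMod.χ₄_nat_eq_if_mod_four]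
  unfold chi4
  have h4 : n % 4 < 4 := Nat.mod_lt _ (by norm_num)
  have h2 : n % 2 = n % 4 % 2 := by omega
  rw [h2]
  interval_cases n % 4 <;> simp

lemma chi4_mul (a b : ℕ) : chi4 (a * b) = chi4 a * chi4 b := by
  simp only [chi4_eq]
  rw [Nat.cast_mul, map_mul, Int.cast_mul]

lemma chi4_one : chi4 1 = 1 := by simp [chi4]

lemma chi4_zero : chi4 0 = 0 := by simp [chi4]

lemma chi4_pow (a k : ℕ) : chi4 (a ^ k) = chi4 a ^ k := by
  simp only [chi4_eq]
  rw [Nat.cast_pow, map_pow, Int.cast_pow]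

lemma abs_chi4_le (a : ℕ) : |chi4 a| ≤ 1 := by
  unfold chi4
  split_ifs <;> simp

/-- `χ₄(n)/n`. -/
noncomputable def auxL : ArithmeticFunction ℝ := ⟨fun n => chi4 n / n, by simp⟩

/-- `χ₄(n)/φ(n)`. -/
noncomputable def auxF : ArithmeticFunction ℝ := ⟨fun n => chi4 n / (Nat.totient n : ℝ), by simp⟩

/-- `χ₄(n) μ(n)²/(n φ(n))`. -/
noncomputable def auxH : ArithmeticFunction ℝ :=
  ⟨fun n => chi4 n * ((ArithmeticFunction.moebius n : ℤ) : ℝ) ^ 2 / (n * (Nat.totient n : ℝ)),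
    by simp⟩

lemma auxL_apply (n : ℕ) : auxL n = chi4 n / n := rfl

lemma auxF_apply (n : ℕ) : auxF n = chi4 n / (Nat.totient n : ℝ) := rfl

lemma auxH_apply (n : ℕ) : auxH n =
  chi4 n * ((ArithmeticFunction.moebius n : ℤ) : ℝ) ^ 2 / (n * (Nat.totient n : ℝ)) := rfl

lemma auxL_mult : auxL.IsMultiplicative := by
  refine ⟨by simp [auxL_apply, chi4_one], ?_⟩
  intro m n h
  simp only [auxL_apply, chi4_mul]
  push_cast
  rw [mul_div_mul_comm]

lemma auxF_mult : auxF.IsMultiplicative := by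
  refine ⟨by simp [auxF_apply, chi4_one], ?_⟩
  intro m n h
  simp only [auxF_apply, chi4_mul, Nat.totient_mul h]
  push_cast
  rw [mul_div_mul_comm]

lemma auxH_mult : auxH.IsMultiplicative := by
  refine ⟨by simp [auxH_apply, chi4_one], ?_⟩
  intro m n h
  simp only [auxH_apply, chi4_mul, Nat.totient_mul h,
    ArithmeticFunction.isMultiplicative_moebius.map_mul_of_coprime h]
  push_cast
  rw [← mul_div_mul_comm]
  congr 1 <;> ring

lemma auxH_prime (p : ℕ) (hp : p.Prime) : auxH p = chi4 p / ((p : ℝ) * ((p : ℝ) - 1)) := by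
  rw [auxH_apply, ArithmeticFunction.moebius_apply_prime hp, Nat.totient_prime hp,
    Nat.cast_sub hp.one_le]
  simp

lemma auxH_prime_pow (p k : ℕ) (hp : p.Prime) : auxH (p ^ (k + 2)) = 0 := by
  rw [auxH_apply, ArithmeticFunction.moebius_apply_prime_pow hp (by omega)]
  simp

lemma auxF_eq : auxF = auxH * auxL := by
  rw [ArithmeticFunction.IsMultiplicative.eq_iff_eq_on_prime_powers _ auxF_mult _
    (auxH_mult.mul auxL_mult)]
  intro p i hp
  rw [ArithmeticFunction.mul_apply, Nat.sum_divisorsAntidiagonal (fun x y => auxH x * auxL y),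
    Nat.sum_divisors_prime_pow hp]
  rcases i with _ | i
  · simp [auxF_mult.map_one, auxH_mult.map_one, auxL_mult.map_one]
  · rw [Finset.sum_range_succ', Finset.sum_range_succ']
    rw [Finset.sum_eq_zero (fun j _ => by rw [auxH_prime_pow p j hp, zero_mul])]
    have hp0 : (p : ℝ) ≠ 0 := by exact_mod_cast hp.ne_zero
    have hp1 : (p : ℝ) - 1 ≠ 0 := by
      have : (1 : ℝ) < p := by exact_mod_cast hp.one_lt
      linarith
    have e : p ^ (i + 1) / p = p ^ i := by
      rw [pow_succ, Nat.mul_div_cancel _ hp.pos]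
    simp only [zero_add, pow_one, pow_zero, Nat.div_one, auxH_mult.map_one, e, auxH_prime p hp]
    rw [auxL_apply, auxL_apply, auxF_apply, Nat.totient_prime_pow_succ hp]
    simp only [chi4_pow]
    push_cast [Nat.cast_sub hp.one_le]
    field_simp
    ring

lemma totient_sq (n : ℕ) : n ≤ 2 * n.totient ^ 2 ∧ (n % 2 = 1 → n ≤ n.totient ^ 2) := by
  induction n using Nat.recOnPosPrimePosCoprime with
  | zero => simp
  | one => simp
  | prime_pow p n hp hn =>
    obtain ⟨k, rfl⟩ : ∃ k, n = k + 1 := ⟨n - 1, by omega⟩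
    rw [Nat.totient_prime_pow_succ hp]
    have hpk : p ^ k ≤ (p ^ k) ^ 2 := Nat.le_self_pow (by norm_num) _
    have key : (p = 2 ∧ 1 ≤ p ^ k) ∨ p ≤ (p - 1) ^ 2 := by
      rcases hp.two_le.eq_or_lt with h | h
      · left; exact ⟨h.symm, Nat.one_le_pow _ _ hp.pos⟩
      · right
        obtain ⟨q, rfl⟩ : ∃ q, p = q + 3 := ⟨p - 3, by omega⟩
        have : q + 3 - 1 = q + 2 := by omega
        rw [this]
        nlinarith
    rcases key with ⟨rfl, h⟩ | h
    · constructor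
      · rw [pow_succ]; norm_num; linarith
      · intro h2
        rw [pow_succ] at h2
        omega
    · have : p ^ (k + 1) ≤ (p ^ k * (p - 1)) ^ 2 := by
        rw [pow_succ, mul_pow]
        exact Nat.mul_le_mul hpk h
      exact ⟨by omega, fun _ => this⟩
  | coprime a b _ha _hb hab ha' hb' =>
    rw [Nat.totient_mul hab, mul_pow]
    have hor : a % 2 = 1 ∨ b % 2 = 1 := by
      by_contra hcon
      have h1 : 2 ∣ a := by omega
      have h2 : 2 ∣ b := by omega
      have := Nat.dvd_gcd h1 h2
      rw [hab] at this
      omega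
    constructor
    · rcases hor with h | h
      · calc a * b ≤ a.totient ^ 2 * (2 * b.totient ^ 2) := Nat.mul_le_mul (ha'.2 h) hb'.1
          _ = _ := by ring
      · calc a * b ≤ (2 * a.totient ^ 2) * (b.totient ^ 2) := Nat.mul_le_mul ha'.1 (hb'.2 h)
          _ = _ := by ring
    · intro h
      have h1 : a % 2 = 1 := by
        rcases Nat.mod_two_eq_zero_or_one a with h0 | h0
        · rw [Nat.mul_mod, h0] at h; simp at h
        · exact h0
      have h2 : b % 2 = 1 := by
        rcases Nat.mod_two_eq_zero_or_one b with h0 | h0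
        · rw [Nat.mul_mod, h0] at h; simp at h
        · exact h0
      exact Nat.mul_le_mul (ha'.2 h1) (hb'.2 h2)

lemma abs_auxH_le (n : ℕ) : |auxH n| ≤ 2 * (1 / (n : ℝ) ^ ((3 : ℝ) / 2)) := by
  rcases Nat.eq_zero_or_pos n with rfl | hn
  · simp
  have hn' : (0 : ℝ) < n := by exact_mod_cast hn
  have ht : (0 : ℝ) < (n.totient : ℝ) := by exact_mod_cast Nat.totient_pos.2 hn
  have h1 : |auxH n| ≤ 1 / (n * (n.totient : ℝ)) := by
    rw [auxH_apply, abs_div, abs_of_pos (mul_pos hn' ht)]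
    gcongr
    rw [abs_mul]
    have hm : |((ArithmeticFunction.moebius n : ℤ) : ℝ) ^ 2| ≤ 1 := by
      rw [abs_pow]
      have : |((ArithmeticFunction.moebius n : ℤ) : ℝ)| ≤ 1 := by
        exact_mod_cast ArithmeticFunction.abs_moebius_le_one
      exact pow_le_one₀ (abs_nonneg _) this
    calc _ ≤ 1 * (1 : ℝ) := mul_le_mul (abs_chi4_le n) hm (abs_nonneg _) zero_le_one
      _ = 1 := by norm_num
  refine h1.trans ?_
  have h2 : (n : ℝ) ^ ((3 : ℝ) / 2) = n * √n := by
    rw [show (3 : ℝ) / 2 = 1 + 1 / 2 by norm_num, Real.rpow_add hn', Real.rpow_one,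
      Real.sqrt_eq_rpow]
  have h3 : √(n : ℝ) ≤ 2 * n.totient := by
    apply Real.sqrt_le_iff.2
    refine ⟨by positivity, ?_⟩
    have : (n : ℝ) ≤ 2 * (n.totient : ℝ) ^ 2 := by exact_mod_cast (totient_sq n).1
    nlinarith
  have hs : 0 < √(n : ℝ) := Real.sqrt_pos.2 hn'
  rw [h2, mul_one_div, div_le_div_iff₀ (by positivity) (by positivity)]
  nlinarith

lemma summable_auxH : Summable (fun n => ‖auxH n‖) := by
  refine Summable.of_nonneg_of_le (fun _ => norm_nonneg _) (fun n => abs_auxH_le n) ?_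
  exact (Real.summable_one_div_nat_rpow.2 (by norm_num)).mul_left 2

lemma euler_auxH : ∏' p : Nat.Primes, (1 + chi4 p / ((p : ℝ) * ((p : ℝ) - 1))) = ∑' n, auxH n := by
  have h := EulerProduct.eulerProduct_hasProd (f := fun n => auxH n) auxH_mult.map_one
    (fun {m n} h => auxH_mult.map_mul_of_coprime h) summable_auxH (by simp)
  rw [← h.tprod_eq]
  congr 1
  ext p
  rw [tsum_eq_sum (s := Finset.range 2)]
  · simp [Finset.sum_range_succ, auxH_mult.map_one, auxH_prime _ p.2]
  · intro b hb
    obtain ⟨k, rfl⟩ : ∃ k, b = k + 2 := ⟨b - 2, by simp at hb; omega⟩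
    exact auxH_prime_pow _ _ p.2

/-- Partial sums of `χ₄(n)/n`. -/
noncomputable def auxT (M : ℕ) : ℝ := ∑ m ∈ Finset.Ioc 0 M, auxL m

lemma auxT_eq (M : ℕ) :
    auxT M = ∑ i ∈ Finset.range ((M + 1) / 2), (-1 : ℝ) ^ i * (1 / (2 * i + 1)) := by
  induction M with
  | zero => simp [auxT]
  | succ M ih =>
    have hs : auxT (M + 1) = auxT M + auxL (M + 1) := by
      unfold auxT
      rw [Finset.sum_Ioc_succ_top (by omega)]
    rw [hs, ih, auxL_apply]
    rcases Nat.even_or_odd' M with ⟨k, rfl | rfl⟩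
    · have e1 : (2 * k + 1) / 2 = k := by omega
      have e2 : (2 * k + 1 + 1) / 2 = k + 1 := by omega
      rw [e1, e2, Finset.sum_range_succ]
      congr 1
      have : chi4 (2 * k + 1) = (-1) ^ k := by
        rw [chi4_eq, ZMod.χ₄_eq_neg_one_pow (by omega), e1]
        simp
      rw [this]
      push_cast
      ring
    · have e1 : (2 * k + 1 + 1) / 2 = k + 1 := by omega
      have e2 : (2 * k + 1 + 1 + 1) / 2 = k + 1 := by omega
      rw [e1, e2]
      have : chi4 (2 * k + 1 + 1) = 0 := by
        unfold chi4
        rw [if_neg (by omega), if_neg (by omega)]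
      simp [this]

lemma auxT_bound (M : ℕ) : |auxT M - π / 4| ≤ 1 / ((M : ℝ) + 1) := by
  have hl : Filter.Tendsto
      (fun n ↦ ∑ i ∈ Finset.range n, (-1 : ℝ) ^ i * (1 / (2 * (i : ℝ) + 1)))
      Filter.atTop (nhds (π / 4)) := by
    have := Real.tendsto_sum_pi_div_four
    simpa [div_eq_mul_inv] using this
  have ha : Antitone (fun i : ℕ => 1 / (2 * (i : ℝ) + 1)) := by
    intro a b hab
    have : (a : ℝ) ≤ b := by exact_mod_cast hab
    dsimp only
    gcongr
  have key : ∀ j : ℕ, |∑ i ∈ Finset.range j, (-1 : ℝ) ^ i * (1 / (2 * (i : ℝ) + 1)) - π / 4|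
      ≤ 1 / (2 * (j : ℝ) + 1) := by
    intro j
    rcases Nat.even_or_odd' j with ⟨k, rfl | rfl⟩
    · have h1 := ha.alternating_series_le_tendsto hl k
      have h2 := ha.tendsto_le_alternating_series hl k
      rw [Finset.sum_range_succ, pow_mul] at h2
      norm_num at h1 h2 ⊢
      rw [abs_le]
      constructor <;> linarith
    · have h1 := ha.alternating_series_le_tendsto hl (k + 1)
      have h2 := ha.tendsto_le_alternating_series hl k
      rw [show 2 * (k + 1) = 2 * k + 1 + 1 by ring, Finset.sum_range_succ, pow_succ, pow_mul] at h1
      norm_num at h1 h2 ⊢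
      rw [abs_le]
      have : 0 < (2 * (2 * (k : ℝ) + 1) + 1)⁻¹ := by positivity
      constructor <;> linarith
  rw [auxT_eq]
  refine (key _).trans ?_
  apply one_div_le_one_div_of_le (by positivity)
  have : M + 1 ≤ 2 * ((M + 1) / 2) + 1 := by omega
  exact_mod_cast this

lemma sum_auxF (N : ℕ) : ∑ d ∈ Finset.Icc 1 N, chi4 d / (Nat.totient d : ℝ)
    = ∑' d, auxH d * auxT (N / d) := by
  have h := ArithmeticFunction.sum_Ioc_mul_eq_sum_sum auxH auxL N
  rw [← auxF_eq] at h
  have e : Finset.Icc 1 N = Finset.Ioc 0 N := by ext; simp; omega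
  rw [e, tsum_eq_sum (s := Finset.Ioc 0 N)]
  · exact h
  · intro b hb
    rcases Nat.eq_zero_or_pos b with rfl | hb0
    · simp
    · have : N / b = 0 := Nat.div_eq_of_lt (by simp at hb; omega)
      rw [this]
      simp [auxT]

lemma term_bound (N d : ℕ) : |auxH d * (auxT (N / d) - π / 4)|
    ≤ ((N : ℝ) + 1) ^ (-(1 : ℝ) / 4) * (2 * (1 / (d : ℝ) ^ ((5 : ℝ) / 4))) := by
  rcases Nat.eq_zero_or_pos d with rfl | hd
  · simp only [ArithmeticFunction.map_zero, zero_mul, abs_zero]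
    positivity
  have hd' : (0 : ℝ) < d := by exact_mod_cast hd
  have hN : (0 : ℝ) < (N : ℝ) + 1 := by positivity
  have hT : |auxT (N / d) - π / 4| ≤ ((N : ℝ) + 1) ^ (-(1 : ℝ) / 4) * (d : ℝ) ^ ((1 : ℝ) / 4) := by
    refine (auxT_bound _).trans ?_
    set M := N / d with hM
    have h1 : N + 1 ≤ d * (M + 1) := Nat.lt_mul_div_succ N hd
    have h1' : (N : ℝ) + 1 ≤ d * ((M : ℝ) + 1) := by exact_mod_cast h1
    have h2 : (1 : ℝ) ≤ (M : ℝ) + 1 := by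
      have : (0 : ℝ) ≤ M := by positivity
      linarith
    have h3 : ((N : ℝ) + 1) ^ ((1 : ℝ) / 4) ≤ (d : ℝ) ^ ((1 : ℝ) / 4) * ((M : ℝ) + 1) := by
      calc _ ≤ (d * ((M : ℝ) + 1)) ^ ((1 : ℝ) / 4) := by gcongr
        _ = (d : ℝ) ^ ((1 : ℝ) / 4) * ((M : ℝ) + 1) ^ ((1 : ℝ) / 4) :=
          Real.mul_rpow hd'.le (by positivity)
        _ ≤ (d : ℝ) ^ ((1 : ℝ) / 4) * ((M : ℝ) + 1) ^ (1 : ℝ) := by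
          gcongr
          norm_num
        _ = _ := by rw [Real.rpow_one]
    rw [neg_div, Real.rpow_neg hN.le, inv_mul_eq_div, div_le_div_iff₀ (by positivity) (by positivity)]
    linarith
  rw [abs_mul]
  calc _ ≤ (2 * (1 / (d : ℝ) ^ ((3 : ℝ) / 2))) *
        (((N : ℝ) + 1) ^ (-(1 : ℝ) / 4) * (d : ℝ) ^ ((1 : ℝ) / 4)) :=
        mul_le_mul (abs_auxH_le d) hT (abs_nonneg _) (by positivity)
    _ = _ := by
      rw [show (3 : ℝ) / 2 = 5 / 4 + 1 / 4 by norm_num, Real.rpow_add hd']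
      field_simp

lemma main_bound : ∃ C : ℝ, 0 < C ∧ ∀ N : ℕ,
    |(∑ d ∈ Finset.Icc 1 N, chi4 d / (Nat.totient d : ℝ))
      - π / 4 * ∏' p : Nat.Primes, (1 + chi4 p / ((p : ℝ) * ((p : ℝ) - 1)))|
      ≤ C * ((N : ℝ) + 1) ^ (-(1 : ℝ) / 4) := by
  have hs : Summable (fun d : ℕ => 2 * (1 / (d : ℝ) ^ ((5 : ℝ) / 4))) :=
    (Real.summable_one_div_nat_rpow.2 (by norm_num)).mul_left 2
  have hS0 : 0 ≤ ∑' d : ℕ, 2 * (1 / (d : ℝ) ^ ((5 : ℝ) / 4)) := tsum_nonneg (fun d => by positivity)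
  refine ⟨(∑' d : ℕ, 2 * (1 / (d : ℝ) ^ ((5 : ℝ) / 4))) + 1, by linarith, ?_⟩
  intro N
  rw [euler_auxH, sum_auxF]
  have hH : Summable (fun n => auxH n) := summable_auxH.of_norm
  have hsb : Summable (fun d : ℕ => ((N : ℝ) + 1) ^ (-(1 : ℝ) / 4) *
      (2 * (1 / (d : ℝ) ^ ((5 : ℝ) / 4)))) := hs.mul_left _
  have hD : Summable (fun d => auxH d * (auxT (N / d) - π / 4)) :=
    Summable.of_norm_bounded hsb (fun d => term_bound N d)
  have hT : Summable (fun d => auxH d * auxT (N / d)) := by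
    have := hD.add (hH.mul_left (π / 4))
    refine this.congr (fun d => ?_)
    ring
  have e : ∑' d, auxH d * auxT (N / d) - π / 4 * ∑' n, auxH n
      = ∑' d, auxH d * (auxT (N / d) - π / 4) := by
    rw [← tsum_mul_left, ← hT.tsum_sub (hH.mul_left _)]
    congr 1
    ext d
    ring
  rw [e]
  have h := tsum_of_norm_bounded (f := fun d => auxH d * (auxT (N / d) - π / 4))
    hsb.hasSum (fun d => term_bound N d)
  rw [tsum_mul_left] at h
  refine h.trans ?_
  have : 0 ≤ ((N : ℝ) + 1) ^ (-(1 : ℝ) / 4) := by positivity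
  nlinarith

/-- For any fixed `A > 10`, with `D = X^{1/2}/(log X)^A`, the partial sums
`∑_{d ≤ D} χ₄(d)/φ(d)` approach `(π/4) ∏_p (1 + χ₄(p)/(p(p-1)))` with error `O(X^{-1/20})`. -/
theorem sum_chi4_div_totient (A : ℝ) (hA : 10 < A) :
    ∃ C : ℝ, 0 < C ∧
      ∀ X : ℝ, 3 ≤ X →
        |(∑ d ∈ Finset.Icc 1 ⌊X ^ ((1 : ℝ) / 2) / Real.log X ^ A⌋₊,
            chi4 d / (Nat.totient d : ℝ))
          - Real.pi / 4 *
            ∏' p : Nat.Primes, (1 + chi4 p / ((p : ℝ) * ((p : ℝ) - 1)))|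
          ≤ C * X ^ (-(1 : ℝ) / 20) := by
  obtain ⟨C, hC, h⟩ := main_bound
  have hA0 : 0 < A := by linarith
  set ε : ℝ := 3 / (10 * A) with hε
  have hε0 : 0 < ε := by positivity
  refine ⟨C * (1 / ε) ^ (A / 4), by positivity, ?_⟩
  intro X hX
  refine (h _).trans ?_
  have hX0 : 0 < X := by linarith
  have hlog : 0 < Real.log X := Real.log_pos (by linarith)
  set D : ℝ := X ^ ((1 : ℝ) / 2) / Real.log X ^ A with hDdef
  have hD0 : 0 < D := by positivity
  have h1 : ((⌊D⌋₊ : ℝ) + 1) ^ (-(1 : ℝ) / 4) ≤ D ^ (-(1 : ℝ) / 4) :=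
    Real.rpow_le_rpow_of_nonpos hD0 (Nat.lt_floor_add_one D).le (by norm_num)
  have h2 : D ^ (-(1 : ℝ) / 4) = X ^ (-(1 : ℝ) / 8) * Real.log X ^ (A / 4) := by
    rw [hDdef, Real.div_rpow (by positivity) (by positivity), ← Real.rpow_mul hX0.le,
      ← Real.rpow_mul hlog.le, div_eq_mul_inv, ← Real.rpow_neg hlog.le]
    congr 2 <;> ring
  have h3 : Real.log X ^ (A / 4) ≤ X ^ ((3 : ℝ) / 40) * (1 / ε) ^ (A / 4) := by
    calc Real.log X ^ (A / 4) ≤ (X ^ ε / ε) ^ (A / 4) := by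
          gcongr
          exact Real.log_le_rpow_div hX0.le hε0
      _ = _ := by
          rw [div_eq_mul_one_div, Real.mul_rpow (by positivity) (by positivity),
            ← Real.rpow_mul hX0.le]
          congr 2
          rw [hε]
          field_simp
          norm_num
  rw [mul_assoc]
  gcongr
  calc _ ≤ X ^ (-(1 : ℝ) / 8) * Real.log X ^ (A / 4) := h1.trans h2.le
    _ ≤ X ^ (-(1 : ℝ) / 8) * (X ^ ((3 : ℝ) / 40) * (1 / ε) ^ (A / 4)) := by gcongr
    _ = (1 / ε) ^ (A / 4) * X ^ (-(1 : ℝ) / 20) := by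
      rw [show -(1 : ℝ) / 20 = -1 / 8 + 3 / 40 by norm_num, Real.rpow_add hX0]
      ring
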